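/- Let $\Gamma$ be a $(Y,Y')$-distance-biregular graph with $D \ge 3$. If there exists an integer $j$ with $2 \le j \le \min\{D-1, D'-1\}$ such that $c_i = 1$ for all $1 \le i \le j$, then $c'_i = 1$ for all $1 \le i \le j$. -/

import Mathlib

open SimpleGraph Set

/-- A `(Y,Y')`-distance-biregular graph: a finite connected bipartite graph in which
every vertex is distance-regularized, and vertices in the same color class share the
same intersection numbers (`c`, `b` for class `Y` and `c'`, `b'` for class `Y'`),
while the two color classes have different intersection arrays.
`D` (resp. `D'`) is the common eccentricity of vertices in `Y` (resp. `Y'`). -/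
structure DBRG (V : Type) [Fintype V] where
  G : SimpleGraph V
  conn : G.Connected
  Y : Finset V
  Y' : Finset V
  Yne : Y.Nonempty
  Y'ne : Y'.Nonempty
  cover : ∀ v, v ∈ Y ∨ v ∈ Y'
  disj : ∀ v, ¬(v ∈ Y ∧ v ∈ Y')
  bip : ∀ u v, G.Adj u v → (u ∈ Y ↔ v ∈ Y')
  D : ℕ
  D' : ℕ
  eccY : ∀ x ∈ Y, (∃ y, G.dist x y = D) ∧ ∀ y, G.dist x y ≤ D
  eccY' : ∀ x ∈ Y', (∃ y, G.dist x y = D') ∧ ∀ y, G.dist x y ≤ D'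
  c : ℕ → ℕ
  b : ℕ → ℕ
  c' : ℕ → ℕ
  b' : ℕ → ℕ
  hc : ∀ i, 1 ≤ i → ∀ x ∈ Y, ∀ z, G.dist x z = i →
    {w | G.Adj z w ∧ G.dist x w = i - 1}.ncard = c i
  hb : ∀ i, ∀ x ∈ Y, ∀ z, G.dist x z = i →
    {w | G.Adj z w ∧ G.dist x w = i + 1}.ncard = b i
  hc' : ∀ i, 1 ≤ i → ∀ x ∈ Y', ∀ z, G.dist x z = i →
    {w | G.Adj z w ∧ G.dist x w = i - 1}.ncard = c' i
  hb' : ∀ i, ∀ x ∈ Y', ∀ z, G.dist x z = i →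
    {w | G.Adj z w ∧ G.dist x w = i + 1}.ncard = b' i
  c0 : c 0 = 0
  c'0 : c' 0 = 0
  nonreg : ¬ (∀ i, c i = c' i ∧ b i = b' i)

/-- `Γ` is `2`-`Y`-homogeneous with parameters `γ i`: for all `1 ≤ i ≤ D - 1` and all
`x ∈ Y`, `y ∈ Γ₂(x)`, `z ∈ Γ_{i,i}(x,y)`, the number of common neighbours of `x` and `y`
at distance `i - 1` from `z` equals `γ i` (independently of `x`, `y`, `z`). -/
def DBRG.TwoYHom {V : Type} [Fintype V] (Γ : DBRG V) (γ : ℕ → ℕ) : Prop :=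
  ∀ i, 1 ≤ i → i ≤ Γ.D - 1 → ∀ x ∈ Γ.Y, ∀ y, Γ.G.dist x y = 2 →
    ∀ z, Γ.G.dist x z = i → Γ.G.dist y z = i →
      {w | Γ.G.dist z w = i - 1 ∧ Γ.G.Adj x w ∧ Γ.G.Adj y w}.ncard = γ i
theorem DBRG.exists_pred {V : Type} [Fintype V] (Γ : DBRG V) (x z : V) (i : ℕ)
    (h : Γ.G.dist x z = i + 1) : ∃ w, Γ.G.Adj z w ∧ Γ.G.dist x w = i := by
  obtain ⟨p, hp⟩ := Γ.conn.exists_walk_length_eq_dist z x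
  rw [SimpleGraph.dist_comm, h] at hp
  cases p with
  | nil => simp at hp
  | cons hadj q =>
    rename_i w
    refine ⟨w, hadj, ?_⟩
    have h1 := SimpleGraph.dist_le q
    have h2 := Γ.conn.dist_triangle (u := x) (v := w) (w := z)
    have h3 : Γ.G.dist w z = 1 := SimpleGraph.dist_eq_one_iff_adj.2 hadj.symm
    rw [SimpleGraph.Walk.length_cons] at hp
    rw [SimpleGraph.dist_comm] at h1
    omega

theorem DBRG.exists_at {V : Type} [Fintype V] (Γ : DBRG V) (x : V) (n : ℕ) :
    ∀ z, ∀ i, Γ.G.dist x z = i + n → ∃ w, Γ.G.dist x w = i := by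
  induction n with
  | zero => intro z i h; exact ⟨z, h⟩
  | succ n ih =>
    intro z i h
    obtain ⟨w, -, hw⟩ := Γ.exists_pred x z (i + n) (by omega)
    exact ih w i hw

theorem DBRG.walk_parity {V : Type} [Fintype V] (Γ : DBRG V) {u v : V} (p : Γ.G.Walk u v) :
    ((u ∈ Γ.Y ↔ v ∈ Γ.Y) ↔ p.length % 2 = 0) := by
  induction p with
  | nil => simp
  | cons h q ih =>
    rename_i a b c
    have h1 := Γ.bip _ _ h
    have h2 := Γ.disj b
    have h3 := Γ.cover b
    rw [SimpleGraph.Walk.length_cons]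
    have h4 : (q.length + 1) % 2 = 0 ↔ ¬ (q.length % 2 = 0) := by omega
    rw [h4, ← ih]
    tauto

theorem DBRG.dist_parity {V : Type} [Fintype V] (Γ : DBRG V) (u v : V) :
    ((u ∈ Γ.Y ↔ v ∈ Γ.Y) ↔ Γ.G.dist u v % 2 = 0) := by
  obtain ⟨p, hp⟩ := Γ.conn.exists_walk_length_eq_dist u v
  rw [← hp]
  exact Γ.walk_parity p

theorem stmt_4 {V : Type} [Fintype V] (Γ : DBRG V) (hD : 3 ≤ Γ.D)
    (j : ℕ) (hj1 : 2 ≤ j) (hj2 : j ≤ min (Γ.D - 1) (Γ.D' - 1))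
    (hc : ∀ i, 1 ≤ i → i ≤ j → Γ.c i = 1) :
    ∀ i, 1 ≤ i → i ≤ j → Γ.c' i = 1 := by
  have uniq : ∀ i, 1 ≤ i → i ≤ j → ∀ x ∈ Γ.Y, ∀ z, Γ.G.dist x z = i → ∀ w w',
      Γ.G.Adj z w → Γ.G.dist x w = i - 1 → Γ.G.Adj z w' → Γ.G.dist x w' = i - 1 → w = w' := by
    intro i h1 h2 x hx z hz w w' a1 a2 a3 a4
    have h := Γ.hc i h1 x hx z hz
    rw [hc i h1 h2, Set.ncard_eq_one] at h
    obtain ⟨a, ha⟩ := h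
    have e1 : w ∈ ({a} : Set V) := ha ▸ (show w ∈ {w | _} from ⟨a1, a2⟩)
    have e2 : w' ∈ ({a} : Set V) := ha ▸ (show w' ∈ {w | _} from ⟨a3, a4⟩)
    rw [Set.mem_singleton_iff] at e1 e2
    rw [e1, e2]
  intro i hi1 hij
  obtain ⟨x, hx⟩ := Γ.Y'ne
  obtain ⟨⟨y, hy⟩, -⟩ := Γ.eccY' x hx
  obtain ⟨z, hz⟩ := Γ.exists_at x (Γ.D' - i) y i (by omega)
  obtain ⟨w, hzw, hxw⟩ := Γ.exists_pred x z (i - 1) (by omega)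
  rw [← Γ.hc' i hi1 x hx z hz, Set.ncard_eq_one]
  refine ⟨w, ?_⟩
  ext w'
  simp only [Set.mem_setOf_eq, Set.mem_singleton_iff]
  refine ⟨?_, fun h => h ▸ ⟨hzw, hxw⟩⟩
  rintro ⟨hzw', hxw'⟩
  by_cases hi : i = 1
  · subst hi
    have e1 := (Γ.conn.dist_eq_zero_iff).1 hxw
    have e2 := (Γ.conn.dist_eq_zero_iff).1 hxw'
    rw [← e1, ← e2]
  obtain ⟨q, hxq, hq⟩ := Γ.exists_pred w' x (i - 2) (by rw [SimpleGraph.dist_comm]; omega)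
  obtain ⟨p, hwp, hp⟩ := Γ.exists_pred x w (i - 2) (by omega)
  have hqY : q ∈ Γ.Y := by
    have h1 := Γ.bip q x hxq.symm
    exact h1.2 hx
  have dxq : Γ.G.dist x q = 1 := SimpleGraph.dist_eq_one_iff_adj.2 hxq
  have dqx : Γ.G.dist q x = 1 := SimpleGraph.dist_eq_one_iff_adj.2 hxq.symm
  have dzw : Γ.G.dist w z = 1 := SimpleGraph.dist_eq_one_iff_adj.2 hzw.symm
  have dzw' : Γ.G.dist w' z = 1 := SimpleGraph.dist_eq_one_iff_adj.2 hzw'.symm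
  have dpw : Γ.G.dist p w = 1 := SimpleGraph.dist_eq_one_iff_adj.2 hwp.symm
  rw [SimpleGraph.dist_comm] at hq
  have t1 := Γ.conn.dist_triangle (u := q) (v := w') (w := z)
  have t2 := Γ.conn.dist_triangle (u := x) (v := q) (w := z)
  have t3 := Γ.conn.dist_triangle (u := q) (v := x) (w := w)
  have t4 := Γ.conn.dist_triangle (u := x) (v := q) (w := w)
  have t5 := Γ.conn.dist_triangle (u := q) (v := x) (w := p)
  have t6 := Γ.conn.dist_triangle (u := q) (v := p) (w := w)
  have hqz : Γ.G.dist q z = i - 1 := by omega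
  have par : Γ.G.dist q w % 2 = 0 ↔ Γ.G.dist q w' % 2 = 0 := by
    rw [← Γ.dist_parity, ← Γ.dist_parity]
    have b1 := Γ.bip _ _ hzw
    have b2 := Γ.bip _ _ hzw'
    have d1 := Γ.disj w
    have d2 := Γ.disj w'
    have k1 := Γ.cover w
    have k2 := Γ.cover w'
    tauto
  by_cases hqw : Γ.G.dist q w = i - 2
  · exact uniq (i - 1) (by omega) (by omega) q hqY z hqz w' w hzw' (by omega) hzw (by omega)
  · exfalso
    have e : Γ.G.dist q w = i := by omega
    have hpz := uniq i hi1 hij q hqY w e p z hwp (by omega) hzw.symm hqz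
    subst hpz
    omega
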